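/- Let W_1 be the 4×4 matrix with rows (1,1,1,−1), (1,1,1,−1), (1,1,1,−1), (−1,−1,−1,1), and let Z_{w,1} = Σ_{i,j} [W_1]_{ij} Π_i⊗Π_j (first Bell projector on qubits A'B', second on A''B''). Then Z_{w,1} is decomposable with respect to the partition A=(A',A''), B=(B',B''): there exist positive semidefinite 16×16 matrices P and Q such that Z_{w,1} = P + Q^{T_B}, where T_B denotes the partial transpose over the indices of the qubits B' and B''. -/

import Mathlib

open Matrix Complex
open scoped Kronecker ComplexOrder

noncomputable section
namespace Paper

abbrev Q2 := Fin 2 × Fin 2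
abbrev M4 := Matrix Q2 Q2 ℂ
abbrev M16 := Matrix (Q2 × Q2) (Q2 × Q2) ℂ

/-- `1/√2` as a complex number. -/
def invSqrt2 : ℂ := ((Real.sqrt 2)⁻¹ : ℝ)

/-- The four Bell states `|Φ₁⟩,…,|Φ₄⟩` as vectors in `ℂ²⊗ℂ²`
(product basis indexed by `Fin 2 × Fin 2`). -/
def bell : Fin 4 → Q2 → ℂ :=
  ![fun p => !![invSqrt2, 0; 0, invSqrt2] p.1 p.2,
    fun p => !![invSqrt2, 0; 0, -invSqrt2] p.1 p.2,
    fun p => !![0, invSqrt2; invSqrt2, 0] p.1 p.2,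
    fun p => !![0, invSqrt2; -invSqrt2, 0] p.1 p.2]

/-- The Bell projectors `Π_i = |Φ_i⟩⟨Φ_i|`. -/
def BellProj (i : Fin 4) : M4 := vecMulVec (bell i) (star (bell i))

/-- The Pauli matrices `σ_x, σ_y, σ_z`. -/
def pauli : Fin 3 → Matrix (Fin 2) (Fin 2) ℂ :=
  ![!![0, 1; 1, 0], !![0, -I; I, 0], !![1, 0; 0, -1]]

/-- Reindexing `((a',b'),(a'',b'')) ↦ ((a',a''),(b',b''))`. -/
def swapMid : (Q2 × Q2) ≃ (Q2 × Q2) where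
  toFun p := ((p.1.1, p.2.1), (p.1.2, p.2.2))
  invFun p := ((p.1.1, p.2.1), (p.1.2, p.2.2))
  left_inv _ := rfl
  right_inv _ := rfl

/-- The rank-one matrix `x x†`. -/
def pureMat {d : Type*} (x : d → ℂ) : Matrix d d ℂ := vecMulVec x (star x)

/-- Separability of a 16×16 four-qubit matrix (qubit order A',B',A'',B'')
across the partition A = (A',A''), B = (B',B''). -/
def SepAB (ρ : M16) : Prop :=
  ∃ (n : ℕ) (x y : Fin n → Q2 → ℂ),
    (Matrix.reindex swapMid swapMid ρ) = ∑ k, (pureMat (x k)) ⊗ₖ (pureMat (y k))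


/-- Partial transpose over the qubits B' and B'' of a four-qubit matrix
(index order `((a',b'),(a'',b''))`): the row and column indices of the
B-factors are swapped in each entry. -/
def ptransposeB (M : M16) : M16 :=
  fun p q =>
    M ((p.1.1, q.1.2), (p.2.1, q.2.2)) ((q.1.1, p.1.2), (q.2.1, p.2.2))

/-- The witness matrix `W₁`. -/
def W1 : Matrix (Fin 4) (Fin 4) ℝ :=
  !![1, 1, 1, -1; 1, 1, 1, -1; 1, 1, 1, -1; -1, -1, -1, 1]

/-!
The swap operator `F` on `ℂ² ⊗ ℂ²` fixes the Bell states `Φ₁, Φ₂, Φ₃` and negates `Φ₄`, so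
`F = Π₁ + Π₂ + Π₃ - Π₄`. Since `W₁ = s sᵀ` for the sign vector `s = (1, 1, 1, -1)`, it follows
that `Z_{w,1} = F ⊗ F`. Finally `F` is the partial transpose of `ω ω†` with
`ω = |00⟩ + |11⟩`, so `P = 0` and `Q = ω ω† ⊗ ω ω†` form a decomposition.
-/

section MatrixLemmas

variable {ι κ l m n p R : Type*}

theorem sum_sum_mul_smul_kronecker [CommSemiring R] [Fintype ι] [Fintype κ]
    (v : ι → R) (w : κ → R) (A : ι → Matrix l m R) (B : κ → Matrix n p R) :
    ∑ i, ∑ j, (v i * w j) • (A i ⊗ₖ B j) = (∑ i, v i • A i) ⊗ₖ (∑ j, w j • B j) := by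
  ext a b
  simp only [Matrix.sum_apply, Matrix.smul_apply, kroneckerMap_apply, smul_eq_mul,
    Finset.sum_mul_sum]
  exact Finset.sum_congr rfl fun i _ => Finset.sum_congr rfl fun j _ => mul_mul_mul_comm ..

theorem eq_sum_smul_vecMulVec_of_mulVec_eq_smul [CommSemiring R] [Fintype ι] [Fintype n]
    [DecidableEq n] {A : Matrix n n R} {v u : ι → n → R} {c : ι → R}
    (hcomplete : ∑ i, vecMulVec (v i) (u i) = 1) (heigen : ∀ i, A *ᵥ v i = c i • v i) :
    A = ∑ i, c i • vecMulVec (v i) (u i) :=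
  calc
    A = A * ∑ i, vecMulVec (v i) (u i) := by rw [hcomplete, mul_one]
    _ = ∑ i, c i • vecMulVec (v i) (u i) := by
      simp only [Finset.mul_sum, mul_vecMulVec, heigen, smul_vecMulVec]

/-- The partial transpose of a bipartite matrix over its second tensor factor; `ptransposeB`
is its analogue for two copies of the bipartite system. -/
def ptransposeSnd (M : Matrix (m × n) (m × n) R) : Matrix (m × n) (m × n) R :=
  fun a b => M (a.1, b.2) (b.1, a.2)

theorem ptransposeB_kronecker (X Y : M4) :
    ptransposeB (X ⊗ₖ Y) = ptransposeSnd X ⊗ₖ ptransposeSnd Y :=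
  rfl

/-- The swap operator `x ⊗ y ↦ y ⊗ x` on `ℂⁿ ⊗ ℂⁿ`. -/
def swapMatrix (n : Type*) [DecidableEq n] : Matrix (n × n) (n × n) ℂ :=
  Equiv.Perm.permMatrix ℂ (Equiv.prodComm n n)

theorem swapMatrix_mulVec [Fintype n] [DecidableEq n] (x : n × n → ℂ) :
    swapMatrix n *ᵥ x = x ∘ Prod.swap :=
  permMatrix_mulVec _

-- `vec 1` is the unnormalized maximally entangled vector `∑ k, |k⟩ ⊗ |k⟩`.
theorem ptransposeSnd_pureMat_vec_one [DecidableEq n] :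
    ptransposeSnd (pureMat (vec (1 : Matrix n n ℂ))) = swapMatrix n := by
  ext ⟨a, b⟩ ⟨c, d⟩
  simp [ptransposeSnd, pureMat, vecMulVec_apply, swapMatrix, PEquiv.toMatrix_apply, one_apply,
    ← ite_and, apply_ite, eq_comm, and_comm]

end MatrixLemmas

theorem invSqrt2_mul_self : invSqrt2 * invSqrt2 = 1 / 2 := by
  rw [invSqrt2, ← ofReal_mul, ← mul_inv, Real.mul_self_sqrt zero_le_two]
  norm_num

theorem conj_invSqrt2 : (starRingEnd ℂ) invSqrt2 = invSqrt2 :=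
  conj_ofReal _

theorem sum_bellProj : ∑ i, BellProj i = 1 := by
  ext ⟨a, b⟩ ⟨c, d⟩
  fin_cases a <;> fin_cases b <;> fin_cases c <;> fin_cases d <;>
    simp [Fin.sum_univ_four, BellProj, bell, vecMulVec_apply, conj_invSqrt2,
      invSqrt2_mul_self] <;> norm_num

/-- The exchange symmetry of the Bell states: `|Φ₁⟩, |Φ₂⟩, |Φ₃⟩` are symmetric and the singlet
`|Φ₄⟩` is antisymmetric. -/
def exchangeSign : Fin 4 → ℂ := ![1, 1, 1, -1]

theorem bell_comp_swap (i : Fin 4) : bell i ∘ Prod.swap = exchangeSign i • bell i := by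
  ext ⟨a, b⟩
  fin_cases i <;> fin_cases a <;> fin_cases b <;> simp [bell, exchangeSign]

theorem swapMatrix_eq_sum_exchangeSign_smul_bellProj :
    swapMatrix (Fin 2) = ∑ i, exchangeSign i • BellProj i :=
  eq_sum_smul_vecMulVec_of_mulVec_eq_smul sum_bellProj fun i =>
    (swapMatrix_mulVec _).trans (bell_comp_swap i)

theorem coe_W1_apply (i j : Fin 4) : (W1 i j : ℂ) = exchangeSign i * exchangeSign j := by
  fin_cases i <;> fin_cases j <;> simp [W1, exchangeSign]

theorem sum_W1_smul_bellProj_kronecker :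
    ∑ i, ∑ j, (W1 i j : ℂ) • (BellProj i ⊗ₖ BellProj j) =
      swapMatrix (Fin 2) ⊗ₖ swapMatrix (Fin 2) := by
  simp only [coe_W1_apply, sum_sum_mul_smul_kronecker,
    swapMatrix_eq_sum_exchangeSign_smul_bellProj]

/-- `Z_{w,1} = Σ_{ij} [W₁]_{ij} Π_i⊗Π_j` is decomposable with respect to
the partition A = (A',A''), B = (B',B''): it equals `P + Q^{T_B}` with `P, Q ⪰ 0`. -/
theorem stmt5 :
    ∃ P Q : M16, P.PosSemidef ∧ Q.PosSemidef ∧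
      (∑ i, ∑ j, (W1 i j : ℂ) • (BellProj i ⊗ₖ BellProj j)) = P + ptransposeB Q := by
  have hω : (pureMat (vec (1 : Matrix (Fin 2) (Fin 2) ℂ))).PosSemidef :=
    posSemidef_vecMulVec_self_star _
  refine ⟨0, _, .zero, hω.kronecker hω, ?_⟩
  rw [sum_W1_smul_bellProj_kronecker, zero_add, ptransposeB_kronecker,
    ptransposeSnd_pureMat_vec_one]

end Paper
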